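/- The quotient of the direct product A(D4) × ℤ by the normal closure of the single element (((a1*a2*a3*b)^3)⁻¹, u), where u is a generator of ℤ, is isomorphic to A(D4). -/

import Mathlib

/-- Relations of the Artin group of type `D₄` on generators `a1 = of 0`, `a2 = of 1`,
`a3 = of 2`, `b = of 3`: the `aᵢ` pairwise commute and each `aᵢ` braids with `b`. -/
def AD4rels : Set (FreeGroup (Fin 4)) :=
  {FreeGroup.of 0 * FreeGroup.of 1 * (FreeGroup.of 1 * FreeGroup.of 0)⁻¹,
   FreeGroup.of 0 * FreeGroup.of 2 * (FreeGroup.of 2 * FreeGroup.of 0)⁻¹,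
   FreeGroup.of 1 * FreeGroup.of 2 * (FreeGroup.of 2 * FreeGroup.of 1)⁻¹,
   FreeGroup.of 0 * FreeGroup.of 3 * FreeGroup.of 0 *
      (FreeGroup.of 3 * FreeGroup.of 0 * FreeGroup.of 3)⁻¹,
   FreeGroup.of 1 * FreeGroup.of 3 * FreeGroup.of 1 *
      (FreeGroup.of 3 * FreeGroup.of 1 * FreeGroup.of 3)⁻¹,
   FreeGroup.of 2 * FreeGroup.of 3 * FreeGroup.of 2 *
      (FreeGroup.of 3 * FreeGroup.of 2 * FreeGroup.of 3)⁻¹}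

/-- The Artin group of type `D₄`, as a presented group. -/
abbrev AD4 : Type := PresentedGroup AD4rels

/-- The fundamental element `Δ = (a1 a2 a3 b)^3` of `A(D₄)`. -/
def Δ : AD4 :=
  (PresentedGroup.of 0 * PresentedGroup.of 1 * PresentedGroup.of 2 * PresentedGroup.of 3) ^ 3

/-- The normal closure of the single element `(Δ⁻¹, u)` in `A(D₄) × ℤ`, where `u` is a
generator of the infinite cyclic group `ℤ`. -/
def N : Subgroup (AD4 × Multiplicative ℤ) :=
  Subgroup.normalClosure {(Δ⁻¹, Multiplicative.ofAdd (1 : ℤ))}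

instance : N.Normal := Subgroup.normalClosure_normal

/-- In any group with the `D₄` relations, `(xyzb)^3` commutes with `x`. -/
theorem D4_key {G : Type*} [Group G] (x y z b : G) (hxy : x * y = y * x) (hxz : x * z = z * x)
    (hyz : y * z = z * y) (hx : x * b * x = b * x * b) (hy : y * b * y = b * y * b)
    (hz : z * b * z = b * z * b) :
    x * (x * y * z * b) ^ 3 = (x * y * z * b) ^ 3 * x := by
  have h3 : y * z * b * y * z * b = b * y * z * b * y * z := by
    calc y * z * b * y * z * b = y * z * b * (y * z) * b := by group
      _ = y * z * b * (z * y) * b := by rw [hyz]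
      _ = y * (z * b * z) * y * b := by group
      _ = y * (b * z * b) * y * b := by rw [hz]
      _ = y * b * z * (b * y * b) := by group
      _ = y * b * z * (y * b * y) := by rw [hy]
      _ = y * b * (z * y) * b * y := by group
      _ = y * b * (y * z) * b * y := by rw [hyz]
      _ = (y * b * y) * z * b * y := by group
      _ = (b * y * b) * z * b * y := by rw [hy]
      _ = b * y * (b * z * b) * y := by group
      _ = b * y * (z * b * z) * y := by rw [hz]
      _ = b * y * z * b * (z * y) := by group
      _ = b * y * z * b * (y * z) := by rw [hyz]
      _ = b * y * z * b * y * z := by group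
  have hc : x * (y * z) = (y * z) * x := by
    rw [← mul_assoc, hxy, mul_assoc, hxz, mul_assoc]
  have e : (x * y * z * b) ^ 3 = (x * (y * z)) * (b * (x * (y * z)) * b * ((x * (y * z)) * b)) := by
    simp only [pow_succ, pow_zero, one_mul, mul_assoc]
  have h1 : b * (x * (y * z)) * b * ((x * (y * z)) * b) * x
      = b * x * (y * z * b * y * z * b) * x * b := by
    calc _ = b * (x * (y * z)) * b * (x * (y * z)) * b * x := by group
      _ = b * (x * (y * z)) * b * ((y * z) * x) * b * x := by rw [hc]
      _ = b * x * (y * z) * b * (y * z) * (x * b * x) := by group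
      _ = b * x * (y * z) * b * (y * z) * (b * x * b) := by rw [hx]
      _ = _ := by group
  have h2 : x * (b * (x * (y * z)) * b * ((x * (y * z)) * b))
      = b * x * (b * y * z * b * y * z) * x * b := by
    calc _ = (x * b * x) * (y * z) * b * (x * (y * z)) * b := by group
      _ = (b * x * b) * (y * z) * b * ((y * z) * x) * b := by rw [hx, hc]
      _ = _ := by group
  have hA : x * (x * (y * z)) = (x * (y * z)) * x := by
    rw [mul_assoc x (y * z) x, ← hc]
  have hB : Commute x (b * (x * (y * z)) * b * ((x * (y * z)) * b)) := by
    rw [Commute, SemiconjBy, h2, ← h3, ← h1]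
  rw [e]
  exact Commute.mul_right hA hB

theorem AD4_rel {r s : FreeGroup (Fin 4)} (h : r * s⁻¹ ∈ AD4rels) :
    PresentedGroup.mk AD4rels r = PresentedGroup.mk AD4rels s := by
  have := PresentedGroup.one_of_mem h
  rwa [map_mul, map_inv, mul_inv_eq_one] at this

theorem Δ_central (g : AD4) : Commute Δ g := by
  have h01 : (PresentedGroup.of 0 : AD4) * PresentedGroup.of 1
      = PresentedGroup.of 1 * PresentedGroup.of 0 :=
    AD4_rel (r := FreeGroup.of (0 : Fin 4) * FreeGroup.of (1 : Fin 4))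
      (s := FreeGroup.of (1 : Fin 4) * FreeGroup.of (0 : Fin 4)) (by simp [AD4rels])
  have h02 : (PresentedGroup.of 0 : AD4) * PresentedGroup.of 2
      = PresentedGroup.of 2 * PresentedGroup.of 0 :=
    AD4_rel (r := FreeGroup.of (0 : Fin 4) * FreeGroup.of (2 : Fin 4))
      (s := FreeGroup.of (2 : Fin 4) * FreeGroup.of (0 : Fin 4)) (by simp [AD4rels])
  have h12 : (PresentedGroup.of 1 : AD4) * PresentedGroup.of 2
      = PresentedGroup.of 2 * PresentedGroup.of 1 :=
    AD4_rel (r := FreeGroup.of (1 : Fin 4) * FreeGroup.of (2 : Fin 4))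
      (s := FreeGroup.of (2 : Fin 4) * FreeGroup.of (1 : Fin 4)) (by simp [AD4rels])
  have h0 : (PresentedGroup.of 0 : AD4) * PresentedGroup.of 3 * PresentedGroup.of 0
      = PresentedGroup.of 3 * PresentedGroup.of 0 * PresentedGroup.of 3 :=
    AD4_rel (r := FreeGroup.of (0 : Fin 4) * FreeGroup.of (3 : Fin 4) * FreeGroup.of (0 : Fin 4))
      (s := FreeGroup.of (3 : Fin 4) * FreeGroup.of (0 : Fin 4) * FreeGroup.of (3 : Fin 4)) (by simp [AD4rels])
  have h1 : (PresentedGroup.of 1 : AD4) * PresentedGroup.of 3 * PresentedGroup.of 1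
      = PresentedGroup.of 3 * PresentedGroup.of 1 * PresentedGroup.of 3 :=
    AD4_rel (r := FreeGroup.of (1 : Fin 4) * FreeGroup.of (3 : Fin 4) * FreeGroup.of (1 : Fin 4))
      (s := FreeGroup.of (3 : Fin 4) * FreeGroup.of (1 : Fin 4) * FreeGroup.of (3 : Fin 4)) (by simp [AD4rels])
  have h2 : (PresentedGroup.of 2 : AD4) * PresentedGroup.of 3 * PresentedGroup.of 2
      = PresentedGroup.of 3 * PresentedGroup.of 2 * PresentedGroup.of 3 :=
    AD4_rel (r := FreeGroup.of (2 : Fin 4) * FreeGroup.of (3 : Fin 4) * FreeGroup.of (2 : Fin 4))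
      (s := FreeGroup.of (3 : Fin 4) * FreeGroup.of (2 : Fin 4) * FreeGroup.of (3 : Fin 4)) (by simp [AD4rels])
  have c0 : Commute Δ (PresentedGroup.of 0 : AD4) :=
    (D4_key _ _ _ _ h01 h02 h12 h0 h1 h2).symm
  have c1 : Commute Δ (PresentedGroup.of 1 : AD4) := by
    have := D4_key _ _ _ _ h01.symm h12 h02 h1 h0 h2
    rw [← h01] at this
    exact this.symm
  have c2 : Commute Δ (PresentedGroup.of 2 : AD4) := by
    have := D4_key _ _ _ _ h02.symm h12.symm h01 h2 h0 h1
    rw [← h02, mul_assoc (PresentedGroup.of 0 : AD4), ← h12, ← mul_assoc] at this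
    exact this.symm
  have cc : Commute Δ ((PresentedGroup.of 0 : AD4) * PresentedGroup.of 1 * PresentedGroup.of 2 *
      PresentedGroup.of 3) := (Commute.refl _).pow_left 3
  have c3 : Commute Δ (PresentedGroup.of 3 : AD4) := by
    have := ((c0.mul_right c1).mul_right c2).inv_right.mul_right cc
    rwa [inv_mul_cancel_left] at this
  have hg : g ∈ Subgroup.closure (Set.range (PresentedGroup.of (rels := AD4rels))) := by
    rw [PresentedGroup.closure_range_of]; trivial
  induction hg using Subgroup.closure_induction with
  | mem x hx =>
    obtain ⟨i, rfl⟩ := hx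
    fin_cases i
    · exact c0
    · exact c1
    · exact c2
    · exact c3
  | one => exact Commute.one_right _
  | mul x y _ _ hx hy => exact hx.mul_right hy
  | inv x _ hx => exact hx.inv_right

/-- The map `(x, u^n) ↦ x Δ^n`. -/
noncomputable def D4_phi : AD4 × Multiplicative ℤ →* AD4 :=
  MonoidHom.noncommCoprod (MonoidHom.id AD4) (zpowersHom AD4 Δ)
    (fun x n => by
      rw [zpowersHom_apply]
      exact ((Δ_central x).zpow_left _).symm)

theorem D4_phi_apply (p : AD4 × Multiplicative ℤ) :
    D4_phi p = p.1 * Δ ^ (Multiplicative.toAdd p.2) := rfl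

theorem D4_ker : N = D4_phi.ker := by
  apply le_antisymm
  · refine Subgroup.normalClosure_le_normal ?_
    rintro _ rfl
    simp [MonoidHom.mem_ker, D4_phi_apply]
  · rintro ⟨x, n⟩ h
    rw [MonoidHom.mem_ker, D4_phi_apply] at h
    have hx : x = (Δ⁻¹) ^ (Multiplicative.toAdd n) := by
      rw [inv_zpow]; exact eq_inv_of_mul_eq_one_left h
    have hm : (Δ⁻¹, Multiplicative.ofAdd (1 : ℤ)) ∈ N :=
      Subgroup.subset_normalClosure rfl
    have := N.zpow_mem hm (Multiplicative.toAdd n)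
    rw [Prod.pow_mk, ← hx, ← ofAdd_zsmul] at this
    simpa using this

/-- Corollary 9: `(A(D₄) × ℤ)` modulo the relation `u = (a1 a2 a3 b)^3` is isomorphic to
`A(D₄)` (the algebraic content of `PMod(1,1,2) ≅ A(D₄)`). -/
theorem stmt_14 :
    Nonempty ((AD4 × Multiplicative ℤ) ⧸ N ≃* AD4) := by
  exact ⟨(QuotientGroup.quotientMulEquivOfEq D4_ker).trans
    (QuotientGroup.quotientKerEquivOfSurjective D4_phi
      (fun x => ⟨(x, 1), by simp [D4_phi_apply]⟩))⟩
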